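/- Fisher information is lower semi-continuous with respect to weak convergence: if random variables X_n converge weakly in distribution to X, then I(X) ≤ liminf_n I(X_n). -/

import Mathlib

open MeasureTheory Real Filter

open scoped ENNReal

/-- The Fisher information of a probability measure on `ℝ`: the (extended-real-valued)
integral `∫ p'²/p` over `{p > 0}` if the measure has an absolutely continuous density `p`
with Radon–Nikodym derivative `p'`, and `+∞` otherwise (infimum over an empty family). -/
noncomputable def fisherInfo (μ : Measure ℝ) : ℝ≥0∞ :=
  ⨅ (p : ℝ → ℝ) (_ : μ = volume.withDensity (fun x => ENNReal.ofReal (p x)))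
    (p' : ℝ → ℝ) (_ : ∀ a b : ℝ, p b - p a = ∫ x in a..b, p' x),
      ∫⁻ x in {x | 0 < p x}, ENNReal.ofReal ((p' x) ^ 2 / p x)

/-!
The Fisher information of a finite measure `μ` is the least value of `‖g‖²` over the functions
`g ∈ L²(μ)` with `∫ ψ dμ = ∫ g(x) (∫_x^∞ ψ) dμ(x)` for all test functions `ψ`: by Fubini this
identity says that `y ↦ ∫_{x ≤ y} g dμ` is a density of `μ`, which is then absolutely continuous
with logarithmic derivative `g`. By Cauchy–Schwarz and the Riesz representation theorem, such a `g`
with `‖g‖² ≤ C` exists if and only if `(∫ ψ dμ)² ≤ C ∫ (∫_x^∞ ψ)² dμ(x)` for all `ψ`. Both sides are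
integrals of bounded continuous functions, so for each `ψ` this is a weakly closed condition on `μ`,
and the sublevel sets of the Fisher information are weakly closed.
-/

open scoped NNReal CompactlySupported BoundedContinuousFunction

section WithDensityOfReal

variable {X : Type*} [MeasurableSpace X] {ν : Measure X} {p : X → ℝ}

lemma setIntegral_withDensity_ofReal {E : Type*} [NormedAddCommGroup E] [NormedSpace ℝ E]
    (hp : AEMeasurable p ν) (f : X → E) {s : Set X} (hs : MeasurableSet s) :
    ∫ x in s, f x ∂ν.withDensity (fun x => ENNReal.ofReal (p x)) =
      ∫ x in s, max (p x) 0 • f x ∂ν := by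
  simpa only [ENNReal.toReal_ofReal'] using
    setIntegral_withDensity_eq_setIntegral_toReal_smul₀ hp.ennreal_ofReal.restrict
      (ae_of_all _ fun _ => ENNReal.ofReal_lt_top) f hs

lemma intervalIntegral_withDensity_ofReal {E : Type*} [NormedAddCommGroup E] [NormedSpace ℝ E]
    {ν : Measure ℝ} {p : ℝ → ℝ} (hp : AEMeasurable p ν) (hp0 : 0 ≤ᵐ[ν] p) (f : ℝ → E) (a b : ℝ) :
    ∫ x in a..b, f x ∂ν.withDensity (fun x => ENNReal.ofReal (p x)) =
      ∫ x in a..b, p x • f x ∂ν := by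
  have hset : ∀ s, MeasurableSet s →
      ∫ x in s, f x ∂ν.withDensity (fun x => ENNReal.ofReal (p x)) = ∫ x in s, p x • f x ∂ν :=
    fun s hs => by
      rw [setIntegral_withDensity_ofReal hp f hs]
      refine setIntegral_congr_ae hs ?_
      filter_upwards [hp0] with x hx _
      rw [max_eq_left (by exact hx)]
  rw [intervalIntegral, intervalIntegral, hset _ measurableSet_Ioc, hset _ measurableSet_Ioc]

lemma integral_withDensity_ofReal {E : Type*} [NormedAddCommGroup E] [NormedSpace ℝ E]
    (hp : AEMeasurable p ν) (f : X → E) :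
    ∫ x, f x ∂ν.withDensity (fun x => ENNReal.ofReal (p x)) = ∫ x, max (p x) 0 • f x ∂ν := by
  simpa only [setIntegral_univ] using setIntegral_withDensity_ofReal hp f MeasurableSet.univ

lemma integrable_withDensity_ofReal_iff {E : Type*} [NormedAddCommGroup E] [NormedSpace ℝ E]
    (hp : AEMeasurable p ν) {f : X → E} :
    Integrable f (ν.withDensity fun x => ENNReal.ofReal (p x)) ↔
      Integrable (fun x => max (p x) 0 • f x) ν := by
  simpa only [ENNReal.toReal_ofReal'] using
    integrable_withDensity_iff_integrable_smul₀' hp.ennreal_ofReal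
      (ae_of_all _ fun _ => ENNReal.ofReal_lt_top)

lemma lintegral_withDensity_enorm_div_sq (hp : AEMeasurable p ν) {q : X → ℝ}
    (hq : AEMeasurable q ν) :
    ∫⁻ x, ‖q x / p x‖ₑ ^ 2 ∂ν.withDensity (fun x => ENNReal.ofReal (p x)) =
      ∫⁻ x in {x | 0 < p x}, ENNReal.ofReal (q x ^ 2 / p x) ∂ν := by
  have hqp : AEMeasurable (fun x => ‖q x / p x‖ₑ ^ 2) ν := (hq.div hp).enorm.pow_const 2
  rw [lintegral_withDensity_eq_lintegral_mul₀ hp.ennreal_ofReal hqp,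
    ← lintegral_indicator₀ (nullMeasurableSet_lt aemeasurable_const hp)]
  refine lintegral_congr fun x => ?_
  rw [Pi.mul_apply]
  by_cases hx : 0 < p x
  · rw [Set.indicator_of_mem (s := {x | 0 < p x}) hx, ← ofReal_norm,
      ← ENNReal.ofReal_pow (norm_nonneg _), ← ENNReal.ofReal_mul hx.le, Real.norm_eq_abs, sq_abs]
    congr 1
    field_simp
  · rw [Set.indicator_of_notMem (s := {x | 0 < p x}) hx,
      ENNReal.ofReal_of_nonpos (not_lt.1 hx), zero_mul]

end WithDensityOfReal

section DistributionalDensity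

variable {X : Type*} [TopologicalSpace X] [MeasurableSpace X] {μ ν : Measure X} {p : X → ℝ}

lemma isLocallyFiniteMeasure_withDensity_ofReal [SFinite ν] (hp : LocallyIntegrable p ν) :
    IsLocallyFiniteMeasure (ν.withDensity fun x => ENNReal.ofReal (p x)) where
  finiteAtNhds x := by
    obtain ⟨s, hs, hps⟩ := hp x
    exact ⟨s, hs, (withDensity_apply' _ s).trans_lt hps.setLIntegral_lt_top⟩

lemma isLocallyFiniteMeasure_add (μ ν : Measure X) [IsLocallyFiniteMeasure μ]
    [IsLocallyFiniteMeasure ν] : IsLocallyFiniteMeasure (μ + ν) where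
  finiteAtNhds x := by
    obtain ⟨s, hs, hμs⟩ := μ.finiteAt_nhds x
    obtain ⟨t, ht, hνt⟩ := ν.finiteAt_nhds x
    refine ⟨s ∩ t, inter_mem hs ht, ?_⟩
    rw [Measure.add_apply]
    exact ENNReal.add_lt_top.2 ⟨measure_inter_lt_top_of_left_ne_top hμs.ne,
      measure_inter_lt_top_of_right_ne_top hνt.ne⟩

variable [T2Space X] [LocallyCompactSpace X] [SecondCountableTopology X] [BorelSpace X]
  [IsLocallyFiniteMeasure μ] [IsLocallyFiniteMeasure ν]

-- Moving the negative part of `p` to the other side leaves two positive locally finite measures,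
-- which test functions determine.
lemma add_withDensity_neg_eq_withDensity (hp : LocallyIntegrable p ν)
    (h : ∀ ψ : C_c(X, ℝ), ∫ x, ψ x ∂μ = ∫ x, ψ x * p x ∂ν) :
    μ + ν.withDensity (fun x => ENNReal.ofReal (-p x)) =
      ν.withDensity fun x => ENNReal.ofReal (p x) := by
  have := isLocallyFiniteMeasure_withDensity_ofReal hp
  have : IsLocallyFiniteMeasure (ν.withDensity fun x => ENNReal.ofReal (-p x)) :=
    isLocallyFiniteMeasure_withDensity_ofReal hp.neg
  have := isLocallyFiniteMeasure_add μ (ν.withDensity fun x => ENNReal.ofReal (-p x))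
  refine Measure.ext_of_integral_eq_on_compactlySupported fun ψ => ?_
  have hpm : AEMeasurable p ν := hp.aestronglyMeasurable.aemeasurable
  have hψp : Integrable (fun x => ψ x * p x) ν :=
    hp.integrable_smul_left_of_hasCompactSupport ψ.continuous ψ.hasCompactSupport
  have hψn : Integrable (fun x => max (-p x) 0 * ψ x) ν :=
    (integrable_withDensity_ofReal_iff hpm.fun_neg).1 ψ.integrable
  rw [integral_add_measure ψ.integrable ψ.integrable, h ψ, integral_withDensity_ofReal hpm,
    integral_withDensity_ofReal hpm.fun_neg]
  simp only [smul_eq_mul]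
  rw [← integral_add hψp hψn]
  refine integral_congr_ae (ae_of_all _ fun x => ?_)
  dsimp only
  linear_combination -ψ x * max_zero_sub_max_neg_zero_eq_self (p x)

lemma forall_integral_eq_integral_mul_iff_eq_withDensity (hp : LocallyIntegrable p ν) :
    (∀ ψ : C_c(X, ℝ), ∫ x, ψ x ∂μ = ∫ x, ψ x * p x ∂ν) ↔
      0 ≤ᵐ[ν] p ∧ μ = ν.withDensity fun x => ENNReal.ofReal (p x) := by
  have hpm : AEMeasurable p ν := hp.aestronglyMeasurable.aemeasurable
  refine ⟨fun h => ?_, fun ⟨hp0, hμ⟩ ψ => ?_⟩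
  · have hadd := add_withDensity_neg_eq_withDensity hp h
    have hle : ∀ᵐ x ∂ν, ENNReal.ofReal (-p x) ≤ ENNReal.ofReal (p x) := by
      refine ae_le_of_forall_setLIntegral_le_of_sigmaFinite₀ hpm.neg.ennreal_ofReal
        fun s hs _ => ?_
      have hle_add := Measure.le_add_left (le_refl (ν.withDensity fun x => ENNReal.ofReal (-p x)))
        (ν' := μ) s
      rw [hadd] at hle_add
      simpa only [withDensity_apply _ hs] using hle_add
    have hp0 : 0 ≤ᵐ[ν] p := by
      filter_upwards [hle] with x hx
      by_contra! hneg
      replace hneg : p x < 0 := hneg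
      rw [ENNReal.ofReal_of_nonpos hneg.le, nonpos_iff_eq_zero, ENNReal.ofReal_eq_zero] at hx
      linarith
    have hneg : (fun x => ENNReal.ofReal (-p x)) =ᵐ[ν] 0 := by
      filter_upwards [hp0] with x hx
      exact ENNReal.ofReal_of_nonpos (neg_nonpos.2 hx)
    rw [withDensity_congr_ae hneg, withDensity_zero, add_zero] at hadd
    exact ⟨hp0, hadd⟩
  · rw [hμ, integral_withDensity_ofReal hpm]
    refine integral_congr_ae ?_
    filter_upwards [hp0] with x hx
    rw [max_eq_left (by exact hx), smul_eq_mul, mul_comm]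

end DistributionalDensity

section Riesz

variable {𝕜 E H : Type*} [RCLike 𝕜] [AddCommGroup E] [Module 𝕜 E] [NormedAddCommGroup H]
  [InnerProductSpace 𝕜 H] [CompleteSpace H]

lemma exists_norm_le_and_eq_inner_of_norm_le {T : E →ₗ[𝕜] H} {L : E →ₗ[𝕜] 𝕜} {M : ℝ}
    (hM : 0 ≤ M) (h : ∀ x, ‖L x‖ ≤ M * ‖T x‖) :
    ∃ g : H, ‖g‖ ≤ M ∧ ∀ x, L x = inner 𝕜 g (T x) := by
  obtain ⟨F, rfl⟩ : ∃ F : Module.Dual 𝕜 H, F ∘ₗ T = L := by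
    have hL : L ∈ T.ker.dualAnnihilator :=
      (Submodule.mem_dualAnnihilator L).2 fun x hx => by
        simpa [LinearMap.mem_ker.1 hx] using h x
    rwa [← LinearMap.range_dualMap_eq_dualAnnihilator_ker] at hL
  have hF : ∀ y : T.range, ‖(F ∘ₗ T.range.subtype) y‖ ≤ M * ‖y‖ := by
    rintro ⟨_, x, rfl⟩
    exact h x
  obtain ⟨G, hG, hGnorm⟩ :=
    exists_extension_norm_eq T.range ((F ∘ₗ T.range.subtype).mkContinuous M hF)
  refine ⟨(InnerProductSpace.toDual 𝕜 H).symm G, ?_, fun x => ?_⟩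
  · rw [LinearIsometryEquiv.norm_map, hGnorm]
    exact LinearMap.mkContinuous_norm_le _ hM hF
  · rw [InnerProductSpace.toDual_symm_apply]
    exact (hG ⟨T x, x, rfl⟩).symm

end Riesz

lemma norm_setIntegral_le_integral_norm {X E : Type*} [MeasurableSpace X] {μ : Measure X}
    [NormedAddCommGroup E] [NormedSpace ℝ E] {f : X → E} (hf : Integrable f μ) (s : Set X) :
    ‖∫ x in s, f x ∂μ‖ ≤ ∫ x, ‖f x‖ ∂μ :=
  (norm_integral_le_integral_norm f).trans
    (setIntegral_le_integral hf.norm (ae_of_all _ fun _ => norm_nonneg _))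

section IicIci

variable {X : Type*} [TopologicalSpace X] [LinearOrder X] [OrderClosedTopology X]
  [SecondCountableTopology X] [MeasurableSpace X] [OpensMeasurableSpace X] {μ ν : Measure X}
  [SFinite μ]

lemma integral_mul_setIntegral_Iic_eq_integral_mul_setIntegral_Ici [SFinite ν] {g ψ : X → ℝ}
    (hg : Integrable g μ) (hψ : Integrable ψ ν) :
    ∫ y, ψ y * (∫ x in Set.Iic y, g x ∂μ) ∂ν = ∫ x, g x * (∫ y in Set.Ici x, ψ y ∂ν) ∂μ := by
  have hS : MeasurableSet {z : X × X | z.2 ≤ z.1} :=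
    measurableSet_le measurable_snd measurable_fst
  have hswap := integral_integral_swap (μ := ν) (ν := μ)
    (f := fun y x => {z : X × X | z.2 ≤ z.1}.indicator (fun z => ψ z.1 * g z.2) (y, x))
    ((hψ.mul_prod hg).indicator hS)
  convert hswap using 2 with y x
  · ext y
    rw [← integral_const_mul, ← integral_indicator measurableSet_Iic]
    rfl
  · ext x
    rw [← integral_const_mul, ← integral_indicator measurableSet_Ici]
    refine integral_congr_ae (ae_of_all _ fun y => ?_)
    simp only [Set.indicator, Set.mem_Ici, Set.mem_ofPred_eq, mul_comm]

lemma locallyIntegrable_setIntegral_Iic [IsLocallyFiniteMeasure ν] {E : Type*}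
    [NormedAddCommGroup E] [NormedSpace ℝ E] {g : X → E} (hg : Integrable g μ) :
    LocallyIntegrable (fun y => ∫ x in Set.Iic y, g x ∂μ) ν := by
  have hS : MeasurableSet {z : X × X | z.2 ≤ z.1} :=
    measurableSet_le measurable_snd measurable_fst
  have hmeas : AEStronglyMeasurable (fun y => ∫ x in Set.Iic y, g x ∂μ) ν := by
    simp only [← integral_indicator measurableSet_Iic]
    exact AEStronglyMeasurable.integral_prod_right' (μ := ν)
      (hg.aestronglyMeasurable.comp_snd.indicator hS)
  exact (locallyIntegrable_const (∫ x, ‖g x‖ ∂μ)).mono hmeas <| ae_of_all _ fun y =>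
    (norm_setIntegral_le_integral_norm hg _).trans (le_abs_self _)

end IicIci

section TailIntegral

lemma continuous_setIntegral_Ici {E : Type*} [NormedAddCommGroup E] [NormedSpace ℝ E]
    {ν : Measure ℝ} [NullSingletonClass ν] {f : ℝ → E} (hf : Integrable f ν) :
    Continuous fun x => ∫ y in Set.Ici x, f y ∂ν := by
  have heq : (fun x => ∫ y in Set.Ici x, f y ∂ν) =
      fun x => (∫ y in Set.Ioi 0, f y ∂ν) - ∫ y in 0..x, f y ∂ν := by
    funext x
    rw [integral_Ici_eq_integral_Ioi, eq_sub_iff_add_eq',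
      intervalIntegral.integral_interval_add_Ioi hf.integrableOn hf.integrableOn]
  rw [heq]
  exact continuous_const.sub
    (intervalIntegral.continuous_primitive (fun _ _ => hf.intervalIntegrable) 0)

/-- The tail integral `x ↦ ∫ y in [x, ∞), ψ y` of a test function `ψ`, as a bounded continuous
function. It is minus the primitive of `ψ` that vanishes at `+∞`. -/
noncomputable def tailIntegral : C_c(ℝ, ℝ) →ₗ[ℝ] ℝ →ᵇ ℝ where
  toFun ψ := BoundedContinuousFunction.ofNormedAddCommGroup (fun x => ∫ y in Set.Ici x, ψ y)
    (continuous_setIntegral_Ici ψ.integrable) _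
    fun x => norm_setIntegral_le_integral_norm ψ.integrable (Set.Ici x)
  map_add' ψ φ := by
    ext x
    exact integral_add ψ.integrable.integrableOn φ.integrable.integrableOn
  map_smul' c ψ := by
    ext x
    exact integral_smul c _

lemma tailIntegral_apply (ψ : C_c(ℝ, ℝ)) (x : ℝ) :
    tailIntegral ψ x = ∫ y in Set.Ici x, ψ y := rfl

end TailIntegral

section LpTwo

variable {X : Type*} [MeasurableSpace X] {μ : Measure X}

lemma enorm_sq_eq_lintegral_enorm_sq {E : Type*} [NormedAddCommGroup E] (g : Lp E 2 μ) :
    ‖g‖ₑ ^ 2 = ∫⁻ x, ‖g x‖ₑ ^ 2 ∂μ := by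
  have := eLpNorm_nnreal_pow_eq_lintegral (f := g) (μ := μ) (two_ne_zero (α := ℝ≥0))
  simpa only [Lp.enorm_def, NNReal.coe_ofNat, ENNReal.coe_ofNat, ENNReal.rpow_ofNat] using this

variable [TopologicalSpace X] [BorelSpace X] [SecondCountableTopologyEither X ℝ]
  [IsFiniteMeasure μ]

lemma inner_toLp_eq_integral_mul (g : Lp ℝ 2 μ) (f : X →ᵇ ℝ) :
    inner ℝ g (BoundedContinuousFunction.toLp 2 μ ℝ f) = ∫ x, g x * f x ∂μ := by
  rw [L2.inner_def]
  refine integral_congr_ae ?_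
  filter_upwards [BoundedContinuousFunction.coeFn_toLp μ (p := 2) (𝕜 := ℝ) f] with x hx
  rw [hx, real_inner_comm]
  rfl

lemma norm_toLp_sq_eq_integral_sq (f : X →ᵇ ℝ) :
    ‖BoundedContinuousFunction.toLp (E := ℝ) 2 μ ℝ f‖ ^ 2 = ∫ x, f x ^ 2 ∂μ := by
  rw [← real_inner_self_eq_norm_sq, BoundedContinuousFunction.inner_toLp]
  simp [sq]

end LpTwo

section Score

variable {μ : Measure ℝ} {g : Lp ℝ 2 μ}

/-- `g` is the score of `μ`: the logarithmic derivative of the density of `μ`, in weak form. It is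
tested against the primitives `- tailIntegral ψ` and not against compactly supported functions, so
that no constant of integration is left in the density `y ↦ ∫ x in (-∞, y], g x ∂μ`. -/
def IsScore (μ : Measure ℝ) (g : Lp ℝ 2 μ) : Prop :=
  ∀ ψ : C_c(ℝ, ℝ), ∫ x, ψ x ∂μ = ∫ x, g x * tailIntegral ψ x ∂μ

variable [IsFiniteMeasure μ]

lemma isScore_iff_eq_withDensity : IsScore μ g ↔ 0 ≤ᵐ[volume] (fun y => ∫ x in Set.Iic y, g x ∂μ) ∧
    μ = volume.withDensity fun y => ENNReal.ofReal (∫ x in Set.Iic y, g x ∂μ) := by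
  have hg : Integrable g μ := (Lp.memLp g).integrable one_le_two
  rw [← forall_integral_eq_integral_mul_iff_eq_withDensity (locallyIntegrable_setIntegral_Iic hg)]
  refine forall_congr' fun ψ => ?_
  simp only [integral_mul_setIntegral_Iic_eq_integral_mul_setIntegral_Ici hg ψ.integrable,
    tailIntegral_apply]

end Score

section AbsolutelyContinuous

lemma absolutelyContinuousOnInterval_comp_of_lipschitzWith {X Y : Type*} [PseudoMetricSpace X]
    [PseudoMetricSpace Y] {K : ℝ≥0} {φ : X → Y} (hφ : LipschitzWith K φ) {f : ℝ → X} {a b : ℝ}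
    (hf : AbsolutelyContinuousOnInterval f a b) :
    AbsolutelyContinuousOnInterval (φ ∘ f) a b := by
  refine squeeze_zero (fun _ => Finset.sum_nonneg fun _ _ => dist_nonneg) (fun I => ?_)
    (by simpa only [mul_zero] using Tendsto.const_mul (K : ℝ) hf)
  rw [Finset.mul_sum]
  exact Finset.sum_le_sum fun _ _ => hφ.dist_le_mul _ _

lemma intervalIntegrable_of_locallyIntegrable {E : Type*} [NormedAddCommGroup E] {f : ℝ → E}
    {μ : Measure ℝ} (hf : LocallyIntegrable f μ) (a b : ℝ) : IntervalIntegrable f μ a b :=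
  (hf.integrableOn_isCompact isCompact_uIcc).intervalIntegrable

section PrimitiveOfIntegral

variable {E : Type*} [NormedAddCommGroup E] [NormedSpace ℝ E] {p p' : ℝ → E}

lemma eq_add_intervalIntegral (h : ∀ a b, p b - p a = ∫ x in a..b, p' x) (a : ℝ) :
    p = fun x => p a + ∫ t in a..x, p' t :=
  funext fun x => sub_eq_iff_eq_add'.1 (h a x)

lemma continuous_of_sub_eq_intervalIntegral (hp' : LocallyIntegrable p')
    (h : ∀ a b, p b - p a = ∫ x in a..b, p' x) : Continuous p := by
  rw [eq_add_intervalIntegral h 0]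
  exact continuous_const.add
    (intervalIntegral.continuous_primitive (intervalIntegrable_of_locallyIntegrable hp') 0)

lemma locallyIntegrable_or_ae_eq_const (h : ∀ a b, p b - p a = ∫ x in a..b, p' x) :
    LocallyIntegrable p' ∨ ∃ c, p =ᵐ[volume] fun _ => c := by
  -- Interval integrals of `p'` across a point where it is not integrable take the junk value `0`.
  by_contra! hcon
  obtain ⟨x, hx⟩ : ∃ x, ¬ IntegrableAtFilter p' (nhds x) volume := not_forall.1 hcon.1
  have hconst : ∀ a b, a < x → x < b → p b = p a := fun a b ha hb => by
    have hab : ¬ IntervalIntegrable p' volume a b := fun hi =>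
      hx ⟨Set.Ioc a b, Ioc_mem_nhds ha hb, hi.1⟩
    rw [← sub_eq_zero, h, intervalIntegral.integral_undef hab]
  refine hcon.2 (p (x - 1)) ?_
  filter_upwards [Measure.ae_ne volume x] with y hy
  rcases lt_or_gt_of_ne hy with hyx | hxy
  · rw [← hconst y (x + 1) hyx (lt_add_one x), hconst (x - 1) (x + 1) (sub_one_lt x) (lt_add_one x)]
  · exact hconst (x - 1) y (sub_one_lt x) hxy

lemma eq_setIntegral_Iic_of_integrable (hp : Integrable p) (hp' : Integrable p')
    (h : ∀ a b, p b - p a = ∫ x in a..b, p' x) (y : ℝ) : p y = ∫ x in Set.Iic y, p' x := by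
  have hlim : Tendsto p atBot (nhds (p y - ∫ x in Set.Iic y, p' x)) := by
    have hp_eq : p = fun a => p y - ∫ x in a..y, p' x :=
      funext fun a => by rw [← h, sub_sub_cancel]
    nth_rw 1 [hp_eq]
    exact tendsto_const_nhds.sub
      (intervalIntegral_tendsto_integral_Iic y hp'.integrableOn tendsto_id)
  have htop : ∀ s ∈ (atBot : Filter ℝ), volume s = ⊤ := fun s hs => by
    obtain ⟨a, ha⟩ := mem_atBot_sets.1 hs
    exact measure_mono_top ha Real.volume_Iic
  exact sub_eq_zero.1 (IntegrableAtFilter.eq_zero_of_tendsto (hp.integrableAtFilter _) htop hlim)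

end PrimitiveOfIntegral

variable {p p' : ℝ → ℝ}

lemma deriv_max_zero_eq_indicator {x d : ℝ} (hp : HasDerivAt p d x) :
    deriv (fun y => max (p y) 0) x = {y | 0 < p y}.indicator (fun _ => d) x := by
  by_cases hx : 0 < p x
  · have hmax : (fun y => max (p y) 0) =ᶠ[nhds x] p := by
      filter_upwards [hp.continuousAt.eventually (lt_mem_nhds hx)] with y hy
      exact max_eq_left hy.le
    rw [hmax.deriv_eq, hp.deriv, Set.indicator_of_mem (s := {y | 0 < p y}) hx]
  · have hmin : IsLocalMin (fun y => max (p y) 0) x := Eventually.of_forall fun y =>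
      (max_eq_right (not_lt.1 hx)).trans_le (le_max_right _ _)
    rw [hmin.deriv_eq_zero, Set.indicator_of_notMem (s := {y | 0 < p y}) hx]

lemma max_zero_sub_max_zero_eq_intervalIntegral_indicator (hp' : LocallyIntegrable p')
    (h : ∀ a b, p b - p a = ∫ x in a..b, p' x) (a b : ℝ) :
    max (p b) 0 - max (p a) 0 = ∫ x in a..b, {x | 0 < p x}.indicator p' x := by
  have hprim : AbsolutelyContinuousOnInterval (fun x => ∫ t in a..x, p' t) a b :=
    IntervalIntegrable.absolutelyContinuousOnInterval_intervalIntegral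
      (intervalIntegrable_of_locallyIntegrable hp' a b) Set.left_mem_uIcc
  have hac : AbsolutelyContinuousOnInterval (fun x => max (p x) 0) a b := by
    have hlip : LipschitzWith 1 fun t => max (p a + t) 0 :=
      (isometry_add_left (p a)).lipschitz.max_const 0
    rw [eq_add_intervalIntegral h a]
    exact absolutelyContinuousOnInterval_comp_of_lipschitzWith hlip hprim
  rw [← hac.integral_deriv_eq_sub]
  refine intervalIntegral.integral_congr_ae ?_
  filter_upwards [_root_.LocallyIntegrable.ae_hasDerivAt_integral hp'] with x hx _
  have hpx : HasDerivAt p (p' x) x := by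
    rw [eq_add_intervalIntegral h a]
    exact (hx a).const_add (p a)
  rw [deriv_max_zero_eq_indicator hpx]
  rfl

end AbsolutelyContinuous

section FisherInformation

variable {μ : Measure ℝ}

lemma fisherInfo_le_lintegral {p p' : ℝ → ℝ}
    (hμ : μ = volume.withDensity fun x => ENNReal.ofReal (p x))
    (h : ∀ a b, p b - p a = ∫ x in a..b, p' x) :
    fisherInfo μ ≤ ∫⁻ x in {x | 0 < p x}, ENNReal.ofReal (p' x ^ 2 / p x) :=
  iInf₂_le_of_le p hμ (iInf₂_le p' h)

variable [IsFiniteMeasure μ]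

lemma IsScore.fisherInfo_le {g : Lp ℝ 2 μ} (hg : IsScore μ g) : fisherInfo μ ≤ ‖g‖ₑ ^ 2 := by
  have hgμ : Integrable g μ := (Lp.memLp g).integrable one_le_two
  obtain ⟨hp0, hμ⟩ := isScore_iff_eq_withDensity.1 hg
  set p : ℝ → ℝ := fun y => ∫ x in Set.Iic y, g x ∂μ
  have hp : AEMeasurable p :=
    (locallyIntegrable_setIntegral_Iic hgμ).aestronglyMeasurable.aemeasurable
  have hintegral := intervalIntegral_withDensity_ofReal hp hp0 g
  have henergy := lintegral_withDensity_enorm_div_sq hp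
    (hp.mul (Lp.stronglyMeasurable g).measurable.aemeasurable)
  rw [← hμ] at hintegral henergy
  have hFTC : ∀ a b, p b - p a = ∫ x in a..b, p x * g x := fun a b => by
    rw [intervalIntegral.integral_Iic_sub_Iic hgμ.integrableOn hgμ.integrableOn]
    exact hintegral a b
  calc fisherInfo μ ≤ ∫⁻ x in {x | 0 < p x}, ENNReal.ofReal ((p x * g x) ^ 2 / p x) :=
        fisherInfo_le_lintegral hμ hFTC
    _ = ∫⁻ x, ‖p x * g x / p x‖ₑ ^ 2 ∂μ := henergy.symm
    _ ≤ ∫⁻ x, ‖g x‖ₑ ^ 2 ∂μ := by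
        refine lintegral_mono fun x => ?_
        gcongr
        rw [enorm_le_iff_norm_le, mul_comm, mul_div_assoc, norm_mul]
        exact mul_le_of_le_one_right (norm_nonneg _) (by simpa using div_self_le_one ‖p x‖)
    _ = ‖g‖ₑ ^ 2 := (enorm_sq_eq_lintegral_enorm_sq g).symm

lemma isScore_toLp_div {p p' : ℝ → ℝ} (hμ : μ = volume.withDensity fun x => ENNReal.ofReal (p x))
    (hp' : LocallyIntegrable p') (h : ∀ a b, p b - p a = ∫ x in a..b, p' x)
    (hg : MemLp (fun x => p' x / p x) 2 μ) : IsScore μ hg.toLp := by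
  have hp : AEMeasurable p := (continuous_of_sub_eq_intervalIntegral hp' h).aemeasurable
  have hmul : (fun x => max (p x) 0 * (p' x / p x)) = {x | 0 < p x}.indicator p' := by
    funext x
    by_cases hx : 0 < p x
    · rw [Set.indicator_of_mem (s := {x | 0 < p x}) hx, max_eq_left hx.le, mul_div_cancel₀ _ hx.ne']
    · rw [Set.indicator_of_notMem (s := {x | 0 < p x}) hx, max_eq_right (not_lt.1 hx), zero_mul]
  have hp_int : Integrable fun x => max (p x) 0 := by
    have h1 : Integrable (fun _ => (1 : ℝ)) μ := integrable_const 1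
    rw [hμ, integrable_withDensity_ofReal_iff hp] at h1
    simpa only [smul_eq_mul, mul_one] using h1
  have hp'_int : Integrable ({x | 0 < p x}.indicator p') := by
    rw [← hmul]
    exact (integrable_withDensity_ofReal_iff hp).1 (hμ ▸ hg.integrable one_le_two)
  have hdensity : ∀ y, ∫ x in Set.Iic y, hg.toLp _ x ∂μ = max (p y) 0 := fun y => by
    calc ∫ x in Set.Iic y, hg.toLp _ x ∂μ = ∫ x in Set.Iic y, p' x / p x ∂μ :=
          integral_congr_ae (ae_restrict_of_ae hg.coeFn_toLp)
      _ = ∫ x in Set.Iic y, {x | 0 < p x}.indicator p' x := by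
          rw [hμ, setIntegral_withDensity_ofReal hp _ measurableSet_Iic, ← hmul]
          rfl
      _ = max (p y) 0 := (eq_setIntegral_Iic_of_integrable hp_int hp'_int
          (max_zero_sub_max_zero_eq_intervalIntegral_indicator hp' h) y).symm
  refine isScore_iff_eq_withDensity.2 ⟨ae_of_all _ fun y => ?_, ?_⟩
  · exact (le_max_right _ _).trans_eq (hdensity y).symm
  · simpa [hdensity, ENNReal.ofReal_max] using hμ

lemma eq_zero_of_ae_eq_const_density {p : ℝ → ℝ}
    (hμ : μ = volume.withDensity fun x => ENNReal.ofReal (p x)) {c : ℝ}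
    (hp : p =ᵐ[volume] fun _ => c) : μ = 0 := by
  have hμc : μ = ENNReal.ofReal c • volume := by
    rw [hμ, ← withDensity_const]
    exact withDensity_congr_ae (hp.fun_comp ENNReal.ofReal)
  have hc : ENNReal.ofReal c = 0 := by
    by_contra hc
    refine measure_ne_top μ Set.univ ?_
    rw [hμc, Measure.smul_apply, Real.volume_univ, smul_eq_mul, ENNReal.mul_top hc]
  rw [hμc, hc, zero_smul]

lemma exists_isScore_enorm_sq_le {p p' : ℝ → ℝ}
    (hμ : μ = volume.withDensity fun x => ENNReal.ofReal (p x))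
    (h : ∀ a b, p b - p a = ∫ x in a..b, p' x)
    (hI : ∫⁻ x in {x | 0 < p x}, ENNReal.ofReal (p' x ^ 2 / p x) ≠ ⊤) :
    ∃ g : Lp ℝ 2 μ, IsScore μ g ∧
      ‖g‖ₑ ^ 2 ≤ ∫⁻ x in {x | 0 < p x}, ENNReal.ofReal (p' x ^ 2 / p x) := by
  obtain hp' | ⟨c, hc⟩ := locallyIntegrable_or_ae_eq_const h
  · have hp : AEMeasurable p := (continuous_of_sub_eq_intervalIntegral hp' h).aemeasurable
    have hp'm : AEMeasurable p' := hp'.aestronglyMeasurable.aemeasurable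
    have hL2 := lintegral_withDensity_enorm_div_sq hp hp'm
    rw [← hμ] at hL2
    have hmeas : AEStronglyMeasurable (fun x => p' x / p x) μ := by
      rw [hμ]
      exact ((hp'm.div hp).mono_ac (withDensity_absolutelyContinuous _ _)).aestronglyMeasurable
    have hg : MemLp (fun x => p' x / p x) 2 μ := by
      refine ⟨hmeas, ?_⟩
      rw [eLpNorm_lt_top_iff_lintegral_rpow_enorm_lt_top two_ne_zero ENNReal.ofNat_ne_top]
      simpa [hL2] using hI.lt_top
    refine ⟨hg.toLp, isScore_toLp_div hμ hp' h hg, ?_⟩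
    rw [enorm_sq_eq_lintegral_enorm_sq, ← hL2]
    refine (lintegral_congr_ae ?_).le
    filter_upwards [hg.coeFn_toLp] with x hx
    rw [hx]
  · have hμ0 : μ = 0 := eq_zero_of_ae_eq_const_density hμ hc
    exact ⟨0, by simp [IsScore, hμ0], by simp⟩

theorem fisherInfo_eq_iInf_isScore :
    fisherInfo μ = ⨅ (g : Lp ℝ 2 μ) (_ : IsScore μ g), ‖g‖ₑ ^ 2 := by
  refine le_antisymm (le_iInf₂ fun g hg => hg.fisherInfo_le)
    (le_iInf₂ fun p hμ => le_iInf₂ fun p' h => ?_)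
  by_cases hI : ∫⁻ x in {x | 0 < p x}, ENNReal.ofReal (p' x ^ 2 / p x) = ⊤
  · exact hI ▸ le_top
  · obtain ⟨g, hg, hgI⟩ := exists_isScore_enorm_sq_le hμ h hI
    exact iInf₂_le_of_le g hg hgI

lemma IsScore.sq_integral_le {g : Lp ℝ 2 μ} (hg : IsScore μ g) (ψ : C_c(ℝ, ℝ)) :
    (∫ x, ψ x ∂μ) ^ 2 ≤ ‖g‖ ^ 2 * ∫ x, tailIntegral ψ x ^ 2 ∂μ := by
  rw [hg ψ, ← inner_toLp_eq_integral_mul, ← norm_toLp_sq_eq_integral_sq, ← mul_pow, ← sq_abs]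
  exact pow_le_pow_left₀ (abs_nonneg _) (abs_real_inner_le_norm _ _) 2

lemma exists_isScore_norm_le {M : ℝ} (hM : 0 ≤ M) (h : ∀ ψ : C_c(ℝ, ℝ),
    (∫ x, ψ x ∂μ) ^ 2 ≤ M ^ 2 * ∫ x, tailIntegral ψ x ^ 2 ∂μ) :
    ∃ g : Lp ℝ 2 μ, IsScore μ g ∧ ‖g‖ ≤ M := by
  obtain ⟨g, hgM, hg⟩ := exists_norm_le_and_eq_inner_of_norm_le (𝕜 := ℝ)
    (T := (BoundedContinuousFunction.toLp (E := ℝ) 2 μ ℝ).toLinearMap ∘ₗ tailIntegral)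
    (L := (CompactlySupportedContinuousMap.integralPositiveLinearMap μ).toLinearMap) hM
    fun ψ => by
      refine abs_le_of_sq_le_sq ?_ (by positivity)
      rw [mul_pow]
      exact (h ψ).trans_eq (by rw [← norm_toLp_sq_eq_integral_sq]; rfl)
  exact ⟨g, fun ψ => (hg ψ).trans (inner_toLp_eq_integral_mul g _), hgM⟩

theorem fisherInfo_le_coe_iff {C : ℝ≥0} : fisherInfo μ ≤ C ↔
    ∀ ψ : C_c(ℝ, ℝ), (∫ x, ψ x ∂μ) ^ 2 ≤ C * ∫ x, tailIntegral ψ x ^ 2 ∂μ := by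
  refine ⟨fun hC ψ => ?_, fun h => ?_⟩
  · have hI : ENNReal.ofReal ((∫ x, ψ x ∂μ) ^ 2) / ENNReal.ofReal (∫ x, tailIntegral ψ x ^ 2 ∂μ) ≤
        fisherInfo μ := by
      rw [fisherInfo_eq_iInf_isScore]
      refine le_iInf₂ fun g hg => ENNReal.div_le_of_le_mul ?_
      rw [← ofReal_norm, ← ENNReal.ofReal_pow (norm_nonneg g), ← ENNReal.ofReal_mul (by positivity)]
      exact ENNReal.ofReal_le_ofReal (hg.sq_integral_le ψ)
    have hC' := (ENNReal.div_le_iff_le_mul (Or.inr ENNReal.coe_ne_top)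
      (Or.inl ENNReal.ofReal_ne_top)).1 (hI.trans hC)
    rwa [← ENNReal.ofReal_coe_nnreal, ← ENNReal.ofReal_mul C.coe_nonneg,
      ENNReal.ofReal_le_ofReal_iff (by positivity)] at hC'
  · obtain ⟨g, hg, hgC⟩ := exists_isScore_norm_le (Real.sqrt_nonneg C)
      (by simpa only [Real.sq_sqrt C.coe_nonneg] using h)
    refine hg.fisherInfo_le.trans ?_
    rw [← ofReal_norm, ← ENNReal.ofReal_pow (norm_nonneg g), ← ENNReal.ofReal_coe_nnreal]
    exact ENNReal.ofReal_le_ofReal ((Real.le_sqrt (norm_nonneg g) C.coe_nonneg).1 hgC)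

end FisherInformation

theorem lowerSemicontinuous_fisherInfo :
    LowerSemicontinuous fun μ : FiniteMeasure ℝ => fisherInfo (μ : Measure ℝ) := by
  refine lowerSemicontinuous_iff_isClosed_preimage.2 fun y => ?_
  induction y with
  | top => simp
  | coe C =>
    have hpre : (fun μ : FiniteMeasure ℝ => fisherInfo (μ : Measure ℝ)) ⁻¹' Set.Iic (C : ℝ≥0∞) =
        ⋂ ψ : C_c(ℝ, ℝ), {μ : FiniteMeasure ℝ | (∫ x, ψ x ∂(μ : Measure ℝ)) ^ 2 ≤
          C * ∫ x, tailIntegral ψ x ^ 2 ∂(μ : Measure ℝ)} := by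
      ext μ
      simp [fisherInfo_le_coe_iff]
    rw [hpre]
    refine isClosed_iInter fun ψ => isClosed_le ?_ ?_
    · exact (FiniteMeasure.continuous_integral_boundedContinuousFunction
        (ψ : ℝ →ᵇ ℝ)).pow 2
    · exact continuous_const.mul
        (FiniteMeasure.continuous_integral_boundedContinuousFunction (tailIntegral ψ ^ 2))

theorem fisherInfo_le_liminf_of_tendsto_general {ι : Type*} {l : Filter ι}
    {μs : ι → FiniteMeasure ℝ} {μ : FiniteMeasure ℝ} (h : Tendsto μs l (nhds μ)) :
    fisherInfo (μ : Measure ℝ) ≤ liminf (fun i => fisherInfo (μs i : Measure ℝ)) l :=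
  (lowerSemicontinuous_fisherInfo.le_liminf μ).trans (liminf_le_liminf_of_le h)

/-- Fisher information is lower semi-continuous with respect to weak convergence:
if `μₙ → μ` weakly, then `fisherInfo μ ≤ liminf fisherInfo μₙ`. -/
theorem fisherInfo_le_liminf_of_tendsto
    (μn : ℕ → ProbabilityMeasure ℝ) (μ : ProbabilityMeasure ℝ)
    (h : Tendsto μn atTop (nhds μ)) :
    fisherInfo (μ : Measure ℝ) ≤ liminf (fun n => fisherInfo (μn n : Measure ℝ)) atTop :=
  fisherInfo_le_liminf_of_tendsto_general (μs := fun n => (μn n).toFiniteMeasure)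
    (μ := μ.toFiniteMeasure)
    ((ProbabilityMeasure.tendsto_nhds_iff_toFiniteMeasure_tendsto_nhds atTop).1 h)
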